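/- arXiv:2604.06282 — 6 statements merged into one kernel-verified Lean document; each statement's English description precedes it below -/
import Mathlib

section
/- Let A be an N×d real matrix, m ∈ {0,…,N}, and suppose η > 0, where η := min_{S⊆[N],|S|=m} min_{‖x‖=1} (1/N)(Σ_{j∈Sᶜ}|a_jᵀx| − Σ_{j∈S}|a_jᵀx|). Set Ā := max_{j∈[N]}‖a_j‖ and K := 2mĀ/(Nη) + 1. Then for every x ∈ ℝ^d and every S ⊆ [N] with |S| = m, (K − 1)·Σ_{j∈Sᶜ}|a_jᵀx| ≥ (K + 1)·Σ_{j∈S}|a_jᵀx|. -/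
/-! Write `P = ∑_{j∈Sᶜ}|⟪a j, x⟫|` and `Q = ∑_{j∈S}|⟪a j, x⟫|`. The claim is equivalent to
`2 Q ≤ (K - 1) (P - Q)`. By homogeneity the definition of `η` gives `P - Q ≥ N η ‖x‖`, and
Cauchy–Schwarz gives `Q ≤ m Ā ‖x‖`; since `(K - 1) N η = 2 m Ā`, the claim follows. -/

open Finset RealInnerProductSpace

/-- if `η > 0`, where `η` is the minimum over `|S| = m` and unit vectors `x`
of `(1/N)(∑_{j∈Sᶜ}|a_jᵀx| - ∑_{j∈S}|a_jᵀx|)`, and `Ā = max_j ‖a_j‖`,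
`K = 2mĀ/(Nη) + 1`, then `(K - 1)∑_{j∈Sᶜ}|a_jᵀx| ≥ (K + 1)∑_{j∈S}|a_jᵀx|`
for every `x` and every `S` with `|S| = m`. -/
theorem stmt_1 (N d : ℕ) (hN : 1 ≤ N) (hd : 1 ≤ d)
    (a : Fin N → EuclideanSpace ℝ (Fin d)) (m : ℕ) (hm : m ≤ N)
    (Abar : ℝ) (hAbar : IsGreatest (Set.range fun j => ‖a j‖) Abar)
    (η : ℝ)
    (hη : IsLeast {c : ℝ | ∃ S : Finset (Fin N), S.card = m ∧
      ∃ x : EuclideanSpace ℝ (Fin d), ‖x‖ = 1 ∧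
        c = (1 / N) * (∑ j ∈ Sᶜ, |(⟪a j, x⟫ : ℝ)| - ∑ j ∈ S, |(⟪a j, x⟫ : ℝ)|)} η)
    (hηpos : 0 < η)
    (K : ℝ) (hK : K = 2 * m * Abar / (N * η) + 1) :
    ∀ (x : EuclideanSpace ℝ (Fin d)) (S : Finset (Fin N)), S.card = m →
      (K + 1) * ∑ j ∈ S, |(⟪a j, x⟫ : ℝ)| ≤ (K - 1) * ∑ j ∈ Sᶜ, |(⟪a j, x⟫ : ℝ)| := by
  intro x S hS
  have hN0 : (0 : ℝ) < N := by exact_mod_cast hN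
  have hA : ∀ j, ‖a j‖ ≤ Abar := fun j => hAbar.2 ⟨j, rfl⟩
  have hA0 : 0 ≤ Abar := (norm_nonneg _).trans (hA ⟨0, hN⟩)
  have hQ : ∑ j ∈ S, |(⟪a j, x⟫ : ℝ)| ≤ m * Abar * ‖x‖ := by
    calc ∑ j ∈ S, |(⟪a j, x⟫ : ℝ)| ≤ ∑ _j ∈ S, Abar * ‖x‖ :=
          Finset.sum_le_sum fun j _ => (abs_real_inner_le_norm _ _).trans
            (mul_le_mul_of_nonneg_right (hA j) (norm_nonneg x))
      _ = m * Abar * ‖x‖ := by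
          rw [Finset.sum_const, hS, nsmul_eq_mul, mul_assoc]
  have hPQ : N * η * ‖x‖ ≤ ∑ j ∈ Sᶜ, |(⟪a j, x⟫ : ℝ)| - ∑ j ∈ S, |(⟪a j, x⟫ : ℝ)| := by
    rcases eq_or_ne x 0 with rfl | hx
    · simp
    have hx0 : 0 < ‖x‖ := norm_pos_iff.mpr hx
    have hunit : ‖(‖x‖⁻¹ : ℝ) • x‖ = 1 := by
      rw [norm_smul, norm_inv, norm_norm, inv_mul_cancel₀ hx0.ne']
    have h := hη.2 ⟨S, hS, (‖x‖⁻¹ : ℝ) • x, hunit, rfl⟩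
    simp only [real_inner_smul_right, abs_mul, abs_inv, abs_norm, ← Finset.mul_sum,
      ← mul_sub] at h
    have h2 := mul_le_mul_of_nonneg_left h (mul_pos hN0 hx0).le
    calc N * η * ‖x‖ = N * ‖x‖ * η := by ring
      _ ≤ _ := h2
      _ = _ := by field_simp
  have hK1 : 0 ≤ K - 1 := by
    rw [hK, add_sub_cancel_right]
    positivity
  have hKη : (K - 1) * (N * η * ‖x‖) = 2 * (m * Abar * ‖x‖) := by
    rw [hK]
    field_simp
    ring
  linarith [mul_le_mul_of_nonneg_left hPQ hK1]
end

section
/- Let A be an N×d real matrix satisfying condition (A₂) with parameter m, let η := min_{S⊆[N],|S|=m} min_{‖x‖=1} (1/N)(Σ_{j∈Sᶜ}|a_jᵀx| − Σ_{j∈S}|a_jᵀx|) (which is positive), and K := 2mĀ/(Nη) + 1. Let 𝒜 ⊆ [N] with |𝒜| = m and μ ∈ ℝ^d. Define, for x ∈ ℝ^d and y ∈ ℝ^N, g(x) := (1/N)·Σ_{j∈[N]} sign(a_jᵀμ − a_jᵀx)·a_j and g'(x,y) := (1/N)·[Σ_{j∈𝒜ᶜ} sign(a_jᵀμ − a_jᵀx)·a_j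 + Σ_{j∈𝒜} sign(y(j) − a_jᵀx)·a_j]. Then for all x ∈ ℝ^d and y ∈ ℝ^N, (x − μ)ᵀ g'(x,y) ≤ (1/K)·(x − μ)ᵀ g(x). -/
open Finset RealInnerProductSpace

/-!
Put `v = x - μ`, `P = ∑_{j∈𝒜ᶜ} |⟪a j, v⟫|` and `Q = ∑_{j∈𝒜} |⟪a j, v⟫|`. Pairing `v` with the
uncorrupted terms gives exactly `-|⟪a j, v⟫|` each, and each corrupted term contributes at most
`|⟪a j, v⟫|`, so the claim follows from `P + Q ≤ K * (P - Q)`, that is, `2 * Q ≤ (K - 1) * (P - Q)`.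
By Cauchy–Schwarz `Q ≤ m * Abar * ‖v‖`, and homogeneity of the definition of `η` gives
`P - Q ≥ N * η * ‖v‖` (`gap_lower_bound`); the value of `K` is exactly what makes these two
bounds fit together.
-/

lemma sign_neg_mul_self (t : ℝ) : Real.sign (-t) * t = -|t| := by
  rcases lt_trichotomy t 0 with h | h | h
  · rw [Real.sign_of_pos (by linarith), abs_of_neg h]; ring
  · simp [h]
  · rw [Real.sign_of_neg (by linarith), abs_of_pos h]; ring

lemma sign_mul_le_abs (r t : ℝ) : Real.sign r * t ≤ |t| := by
  rcases Real.sign_apply_eq r with h | h | h <;> rw [h]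
  · linarith [neg_le_abs t]
  · simp
  · linarith [le_abs_self t]

/-- A lower bound for the normalised gap on the unit sphere extends to all vectors, since the gap
is positively homogeneous of degree one. -/
lemma gap_lower_bound {N d : ℕ} (hN : 1 ≤ N) (a : Fin N → EuclideanSpace ℝ (Fin d))
    (S : Finset (Fin N)) (η : ℝ)
    (h : ∀ x : EuclideanSpace ℝ (Fin d), ‖x‖ = 1 →
      η ≤ (1 / N) * (∑ j ∈ Sᶜ, |(⟪a j, x⟫ : ℝ)| - ∑ j ∈ S, |(⟪a j, x⟫ : ℝ)|))
    (v : EuclideanSpace ℝ (Fin d)) :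
    N * η * ‖v‖ ≤ ∑ j ∈ Sᶜ, |(⟪a j, v⟫ : ℝ)| - ∑ j ∈ S, |(⟪a j, v⟫ : ℝ)| := by
  have hN' : (0 : ℝ) < N := by exact_mod_cast hN
  by_cases hv : v = 0
  · simp [hv]
  have hv' : 0 < ‖v‖ := norm_pos_iff.mpr hv
  have h1 := h (‖v‖⁻¹ • v) (by rw [norm_smul, norm_inv, norm_norm, inv_mul_cancel₀ hv'.ne'])
  simp only [real_inner_smul_right, abs_mul, abs_inv, abs_norm, ← Finset.mul_sum,
    ← mul_sub] at h1
  calc N * η * ‖v‖ ≤ N * ((1 / N) * (‖v‖⁻¹ *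
        (∑ j ∈ Sᶜ, |(⟪a j, v⟫ : ℝ)| - ∑ j ∈ S, |(⟪a j, v⟫ : ℝ)|))) * ‖v‖ := by gcongr
    _ = _ := by field_simp

/-- with `A` satisfying (A₂) with parameter `m`, `η` the (positive) minimum,
`K = 2mĀ/(Nη) + 1`, an adversarial set `𝒜` with `|𝒜| = m`, and
`g(x) = (1/N)∑_j sign(a_jᵀμ - a_jᵀx) a_j`,
`g'(x,y) = (1/N)[∑_{j∈𝒜ᶜ} sign(a_jᵀμ - a_jᵀx) a_j + ∑_{j∈𝒜} sign(y(j) - a_jᵀx) a_j]`,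
one has `(x - μ)ᵀ g'(x,y) ≤ (1/K) (x - μ)ᵀ g(x)` for all `x, y`. -/
theorem stmt_2 (N d : ℕ) (hN : 1 ≤ N) (hd : 1 ≤ d)
    (a : Fin N → EuclideanSpace ℝ (Fin d)) (m : ℕ) (hm : m ≤ N)
    (hA2 : ∀ x : EuclideanSpace ℝ (Fin d), x ≠ 0 →
      ∀ S : Finset (Fin N), S.card = m →
        ∑ j ∈ S, |(⟪a j, x⟫ : ℝ)| < ∑ j ∈ Sᶜ, |(⟪a j, x⟫ : ℝ)|)
    (Abar : ℝ) (hAbar : IsGreatest (Set.range fun j => ‖a j‖) Abar)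
    (η : ℝ)
    (hη : IsLeast {c : ℝ | ∃ S : Finset (Fin N), S.card = m ∧
      ∃ x : EuclideanSpace ℝ (Fin d), ‖x‖ = 1 ∧
        c = (1 / N) * (∑ j ∈ Sᶜ, |(⟪a j, x⟫ : ℝ)| - ∑ j ∈ S, |(⟪a j, x⟫ : ℝ)|)} η)
    (K : ℝ) (hK : K = 2 * m * Abar / (N * η) + 1)
    (𝒜 : Finset (Fin N)) (h𝒜 : 𝒜.card = m)
    (μ : EuclideanSpace ℝ (Fin d)) :
    ∀ (x : EuclideanSpace ℝ (Fin d)) (y : Fin N → ℝ),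
      (⟪x - μ, (1 / (N : ℝ)) •
          (∑ j ∈ 𝒜ᶜ, Real.sign (⟪a j, μ⟫ - ⟪a j, x⟫) • a j
            + ∑ j ∈ 𝒜, Real.sign (y j - ⟪a j, x⟫) • a j)⟫ : ℝ) ≤
      (1 / K) * (⟪x - μ, (1 / (N : ℝ)) •
          ∑ j, Real.sign (⟪a j, μ⟫ - ⟪a j, x⟫) • a j⟫ : ℝ) := by
  intro x y
  have hN' : (0 : ℝ) < N := by exact_mod_cast hN
  have hAbar_nonneg : 0 ≤ Abar := by
    obtain ⟨j, rfl⟩ := hAbar.1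
    exact norm_nonneg _
  have hη_pos : 0 < η := by
    obtain ⟨S, hS, u, hu, rfl⟩ := hη.1
    have hu0 : u ≠ 0 := by
      rintro rfl
      simp at hu
    exact mul_pos (by positivity) (sub_pos.mpr (hA2 u hu0 S hS))
  have hK_pos : 0 < K := by rw [hK]; positivity
  set v := x - μ with hv
  have hdiff : ∀ j, (⟪a j, μ⟫ : ℝ) - ⟪a j, x⟫ = -⟪a j, v⟫ := fun j => by
    rw [hv, inner_sub_right]; ring
  simp only [real_inner_comm _ v, hdiff]
  simp only [real_inner_smul_left, inner_add_left, sum_inner, sign_neg_mul_self]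
  have hsplit := Finset.sum_add_sum_compl 𝒜 (fun j => -|(⟪a j, v⟫ : ℝ)|)
  rw [← hsplit]
  have hcorr : ∑ j ∈ 𝒜, Real.sign (y j - ⟪a j, x⟫) * ⟪a j, v⟫ ≤ ∑ j ∈ 𝒜, |(⟪a j, v⟫ : ℝ)| :=
    Finset.sum_le_sum fun j _ => sign_mul_le_abs _ _
  have hgap := gap_lower_bound hN a 𝒜 η
    (fun u hu => hη.2 ⟨𝒜, h𝒜, u, hu, rfl⟩) v
  have hQ : ∑ j ∈ 𝒜, |(⟪a j, v⟫ : ℝ)| ≤ m * Abar * ‖v‖ := by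
    have := Finset.sum_le_card_nsmul 𝒜 (fun j => |(⟪a j, v⟫ : ℝ)|) (Abar * ‖v‖) fun j _ =>
      (abs_real_inner_le_norm _ _).trans
        (mul_le_mul_of_nonneg_right (hAbar.2 ⟨j, rfl⟩) (norm_nonneg _))
    rw [h𝒜, nsmul_eq_mul] at this
    linarith
  simp only [Finset.sum_neg_distrib]
  set P := ∑ j ∈ 𝒜ᶜ, |(⟪a j, v⟫ : ℝ)|
  set Q := ∑ j ∈ 𝒜, |(⟪a j, v⟫ : ℝ)|
  have hkey : P + Q ≤ K * (P - Q) := by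
    have h1 : 2 * m * Abar / (N * η) * (N * η * ‖v‖) ≤ 2 * m * Abar / (N * η) * (P - Q) := by
      gcongr
    have h2 : 2 * m * Abar / (N * η) * (N * η * ‖v‖) = 2 * (m * Abar * ‖v‖) := by
      field_simp
    rw [hK]
    linarith
  have hdiv : 1 / K * (P + Q) ≤ P - Q := by
    rw [one_div_mul_eq_div, div_le_iff₀ hK_pos]
    linarith
  rw [mul_left_comm]
  gcongr
  linarith
end

section
/- Let A be an N×d real matrix with rows a_1ᵀ,…,a_Nᵀ, let 𝒜 ⊆ [N], and let μ ∈ ℝ^d. Define, for x ∈ ℝ^d and y ∈ ℝ^N, ε(x,y) := (1/N)·Σ_{j∈𝒜ᶜ} a_j·[sign(y(j) − a_jᵀx) − sign(a_jᵀμ − a_jᵀx)]. Then for all x ∈ ℝ^d and y ∈ ℝ^N, (x − μ)ᵀ ε(x,y) ≤ (2/N)·Σ_{j∈𝒜ᶜ} |y(j) − a_jᵀμ|. -/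
open Finset

/-! After exchanging the order of summation, the left side is `1/N` times the sum over `j ∈ 𝒜ᶜ`
of `-s (sign t - sign s) = |s| - s * sign t`, where `s = a_jᵀμ - a_jᵀx` and `t = y j - a_jᵀx`.
Each such term is at most `2 |t - s| = 2 |y j - a_jᵀμ|`: it vanishes when `s` and `t` have the
same sign, and otherwise it is at most `2 |s| ≤ 2 |t - s|`. -/

/-- The bound on a single summand, with `m`, `u`, `y` in the roles of `a_jᵀμ`, `a_jᵀx`, `y j`. -/
lemma sub_mul_sign_sub_sign_le (u m y : ℝ) :
    (u - m) * (Real.sign (y - u) - Real.sign (m - u)) ≤ 2 * |y - m| := by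
  have h1 := le_abs_self (y - m)
  have h2 := neg_abs_le (y - m)
  rcases lt_trichotomy (y - u) 0 with h | h | h <;>
  rcases lt_trichotomy (m - u) 0 with h' | h' | h' <;>
  simp only [h, h', Real.sign_of_neg, Real.sign_of_pos, Real.sign_zero] <;> linarith

/-- with `ε(x,y) = (1/N)∑_{j∈𝒜ᶜ} a_j [sign(y(j) - a_jᵀx) - sign(a_jᵀμ - a_jᵀx)]`,
one has `(x - μ)ᵀ ε(x,y) ≤ (2/N) ∑_{j∈𝒜ᶜ} |y(j) - a_jᵀμ|` for all `x, y`. -/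
theorem stmt_3 (N d : ℕ) (hN : 1 ≤ N) (hd : 1 ≤ d)
    (a : Fin N → Fin d → ℝ) (𝒜 : Finset (Fin N)) (μ : Fin d → ℝ) :
    ∀ (x : Fin d → ℝ) (y : Fin N → ℝ),
      ∑ i, (x i - μ i) *
        ((1 / (N : ℝ)) * ∑ j ∈ 𝒜ᶜ, a j i *
          (Real.sign (y j - ∑ i', a j i' * x i')
            - Real.sign (∑ i', a j i' * μ i' - ∑ i', a j i' * x i'))) ≤
      (2 / (N : ℝ)) * ∑ j ∈ 𝒜ᶜ, |y j - ∑ i', a j i' * μ i'| := by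
  intro x y
  have key : ∀ j, ∑ i, (x i - μ i) * a j i = ∑ i', a j i' * x i' - ∑ i', a j i' * μ i' := by
    intro j
    rw [← Finset.sum_sub_distrib]
    exact Finset.sum_congr rfl fun i _ => by ring
  calc _ = (1 / (N : ℝ)) * ∑ j ∈ 𝒜ᶜ, (∑ i', a j i' * x i' - ∑ i', a j i' * μ i') *
          (Real.sign (y j - ∑ i', a j i' * x i')
            - Real.sign (∑ i', a j i' * μ i' - ∑ i', a j i' * x i')) := by
        simp only [← key, Finset.mul_sum, Finset.sum_mul]
        rw [Finset.sum_comm]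
        exact Finset.sum_congr rfl fun j _ => Finset.sum_congr rfl fun i _ => by
          ring
    _ ≤ (1 / (N : ℝ)) * ∑ j ∈ 𝒜ᶜ, 2 * |y j - ∑ i', a j i' * μ i'| := by
        refine mul_le_mul_of_nonneg_left (Finset.sum_le_sum fun j _ => ?_) (by positivity)
        exact sub_mul_sign_sub_sign_le _ _ _
    _ = _ := by
        rw [← Finset.mul_sum]; ring
end

section
/- Let A be an N×d real matrix, U a d×r real matrix, V a d×s real matrix, and q ∈ {0,…,N}, such that ℝ^d = span(U) ⊕ span(V) and the following partial recovery condition (A₂') holds: for every K ⊆ [N] with |K| ≤ q and every α ∈ ℝ^r with α ≠ 0, inf_{β∈ℝ^s} ( Σ_{i∈Kᶜ} |(A(Uα + Vβ))_i| − Σ_{i∈K} |(A(Uα + Vβ))_i| ) > 0. Let μ = Uα⋆ + Vβ⋆ for some α⋆ ∈ ℝ^r, β⋆ ∈ ℝ^s, let e ∈ ℝ^N have at most q nonzero entries, and set y := Aμ + e. If (α̂, β̂) ∈ ℝ^r × ℝ^s is any minimizer of (α, β) ↦ ‖A(Uα + Vβ) − y‖₁, then α̂ = α⋆. -/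
open Finset

/-!
Let `h = A (U (α̂ - α⋆) + V (β̂ - β⋆))` and let `K` be the support of `e`. Comparing the minimizer
with `(α⋆, β⋆)` gives `‖h - e‖₁ ≤ ‖e‖₁`. Off `K` the residual `h - e` equals `h`, and on `K` the
reverse triangle inequality gives `|h i - e i| ≥ |e i| - |h i|`; summing, the mass of `h` off `K`
is at most its mass on `K`. If `α̂ ≠ α⋆`, this contradicts the recovery condition for `K` and
`α̂ - α⋆`.
-/

/-- under the partial recovery condition (A₂') and
`ℝ^d = span(U) ⊕ span(V)`, any `ℓ₁`-minimizer `(α̂, β̂)` of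
`(α,β) ↦ ‖A(Uα + Vβ) - y‖₁`, where `y = A(Uα⋆ + Vβ⋆) + e` with `e` `q`-sparse,
satisfies `α̂ = α⋆`. -/
theorem stmt_16 (N d r s : ℕ)
    (A : Matrix (Fin N) (Fin d) ℝ)
    (U : Matrix (Fin d) (Fin r) ℝ) (V : Matrix (Fin d) (Fin s) ℝ)
    (q : ℕ) (hq : q ≤ N)
    (hcompl : IsCompl (LinearMap.range U.mulVecLin) (LinearMap.range V.mulVecLin))
    (hA2' : ∀ K : Finset (Fin N), K.card ≤ q → ∀ α : Fin r → ℝ, α ≠ 0 →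
      ∃ c > (0 : ℝ), ∀ β : Fin s → ℝ,
        c ≤ ∑ i ∈ Kᶜ, |A.mulVec (U.mulVec α + V.mulVec β) i|
            - ∑ i ∈ K, |A.mulVec (U.mulVec α + V.mulVec β) i|)
    (αs : Fin r → ℝ) (βs : Fin s → ℝ)
    (μ : Fin d → ℝ) (hμ : μ = U.mulVec αs + V.mulVec βs)
    (e : Fin N → ℝ) (he : (Finset.univ.filter fun i => e i ≠ 0).card ≤ q)
    (y : Fin N → ℝ) (hy : y = A.mulVec μ + e)
    (αh : Fin r → ℝ) (βh : Fin s → ℝ)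
    (hmin : ∀ (α' : Fin r → ℝ) (β' : Fin s → ℝ),
      ∑ i, |A.mulVec (U.mulVec αh + V.mulVec βh) i - y i| ≤
      ∑ i, |A.mulVec (U.mulVec α' + V.mulVec β') i - y i|) :
    αh = αs := by
  by_contra hne
  have hlin : ∀ i, A.mulVec (U.mulVec (αh - αs) + V.mulVec (βh - βs)) i
      = A.mulVec (U.mulVec αh + V.mulVec βh) i - A.mulVec μ i := by
    intro i
    rw [hμ, ← Pi.sub_apply, ← Matrix.mulVec_sub, Matrix.mulVec_sub, Matrix.mulVec_sub,
      add_sub_add_comm]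
  obtain ⟨c, hc, hcβ⟩ := hA2' _ he (αh - αs) (sub_ne_zero.mpr hne)
  have hK := hcβ (βh - βs)
  set K : Finset (Fin N) := Finset.univ.filter fun i => e i ≠ 0 with hKdef
  set h : Fin N → ℝ := A.mulVec (U.mulVec (αh - αs) + V.mulVec (βh - βs)) with hh
  have hle : ∑ i, |h i - e i| ≤ ∑ i, |e i| := by
    have hm := hmin αs βs
    rw [← hμ] at hm
    have h1 : ∀ i, A.mulVec (U.mulVec αh + V.mulVec βh) i - y i = h i - e i := by
      intro i
      rw [hlin, hy, Pi.add_apply, sub_sub]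
    have h2 : ∀ i, |A.mulVec μ i - y i| = |e i| := by
      intro i
      rw [hy, Pi.add_apply, sub_add_cancel_left, abs_neg]
    simpa only [h1, h2] using hm
  rw [← Finset.sum_add_sum_compl K, ← Finset.sum_add_sum_compl K (fun i => |e i|)] at hle
  have he0 : ∀ i ∈ Kᶜ, e i = 0 := by
    intro i hi
    simpa [hKdef] using hi
  have hoff : ∑ i ∈ Kᶜ, |h i - e i| = ∑ i ∈ Kᶜ, |h i| :=
    Finset.sum_congr rfl fun i hi => by rw [he0 i hi, sub_zero]
  have hoff0 : ∑ i ∈ Kᶜ, |e i| = 0 :=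
    Finset.sum_eq_zero fun i hi => by rw [he0 i hi, abs_zero]
  have hon : ∑ i ∈ K, |e i| - ∑ i ∈ K, |h i| ≤ ∑ i ∈ K, |h i - e i| := by
    rw [← Finset.sum_sub_distrib]
    refine Finset.sum_le_sum fun i _ => ?_
    rw [abs_sub_comm (h i)]
    exact abs_sub_abs_le_abs_sub _ _
  linarith
end

section
/- Let A be the 5×2 real matrix with rows (1,0), (1,0), (1,0), (1,−1), (1,1), so that for α, β ∈ ℝ, A(α,β)ᵀ = (α, α, α, α−β, α+β). Then: (i) condition (A₂) with parameter m = 1 fails, i.e., there exist x ∈ ℝ²∖{0} and S ⊆ [5] with |S| = 1 such that Σ_{j∈Sᶜ}|a_jᵀx| ≤ Σ_{j∈S}|a_jᵀx|; and (ii) the partial recovery condition (A₂') holds with q = 1, U = (1,0)ᵀ, V = (0,1)ᵀ, i.e., for every K ⊆ [5] with |K| ≤ 1 and every α ≠ 0, inf_{β∈ℝ} ( Σ_{i∈Kᶜ}|(A(α,β)ᵀ)_i| − Σ_{i∈K}|(A(α,β)ᵀ)_i| ) > 0. -/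
/-! For (i), `x = (0, 1)` and `S = {3}` give equality `1 = 1`: the vector `A x` is `(0, 0, 0, -1, 1)`.
For (ii), the infimum over `β` is at least `|α|`: the rows `(1, 0)` contribute `3|α|`, of which
removing one of them costs `2|α|`, while moving `α ∓ β` to the other side costs at most
`||α - β| - |α + β|| ≤ 2|α|`. -/

open Finset

/-- The 5×2 matrix of STATEMENT 17, with rows (1,0), (1,0), (1,0), (1,-1), (1,1). -/
def A17 : Fin 5 → Fin 2 → ℝ := ![![1, 0], ![1, 0], ![1, 0], ![1, -1], ![1, 1]]

/-- (i) condition (A₂) with `m = 1` fails for `A17`; (ii) the partial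
recovery condition (A₂') holds for `A17` with `q = 1`, `U = (1,0)ᵀ`, `V = (0,1)ᵀ`. -/
theorem stmt_17 :
    (∃ x : Fin 2 → ℝ, x ≠ 0 ∧ ∃ S : Finset (Fin 5), S.card = 1 ∧
      ∑ j ∈ Sᶜ, |∑ i, A17 j i * x i| ≤ ∑ j ∈ S, |∑ i, A17 j i * x i|) ∧
    (∀ K : Finset (Fin 5), K.card ≤ 1 → ∀ α : ℝ, α ≠ 0 →
      ∃ c > (0 : ℝ), ∀ β : ℝ,
        c ≤ ∑ i ∈ Kᶜ, |∑ i', A17 i i' * ![α, β] i'|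
            - ∑ i ∈ K, |∑ i', A17 i i' * ![α, β] i'|) := by
  constructor
  · refine ⟨![0, 1], fun h => by simpa using congrFun h 1, {3}, rfl, ?_⟩
    have hc : ({3} : Finset (Fin 5))ᶜ = {0, 1, 2, 4} := by decide
    rw [hc]
    simp [A17]
  · intro K hK α hα
    refine ⟨|α|, abs_pos.mpr hα, fun β => ?_⟩
    -- Eliminating the sum over the complement leaves the total minus twice the sum over `K`.
    have ht := Finset.sum_add_sum_compl K (fun i => |∑ i', A17 i i' * ![α, β] i'|)
    have hsum : ∑ i, |∑ i', A17 i i' * ![α, β] i'| = 3 * |α| + |α - β| + |α + β| := by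
      simp [A17, Fin.sum_univ_five, sub_eq_add_neg]
      ring
    rw [hsum] at ht
    have h1 : |α - β| ≤ 2 * |α| + |α + β| := by
      have h := abs_sub (2 * α) (α + β)
      rw [abs_mul, abs_two, show 2 * α - (α + β) = α - β by ring] at h
      exact h
    have h2 : |α + β| ≤ 2 * |α| + |α - β| := by
      have h := abs_sub (2 * α) (α - β)
      rw [abs_mul, abs_two, show 2 * α - (α - β) = α + β by ring] at h
      exact h
    have h3 : ∑ i ∈ K, |∑ i', A17 i i' * ![α, β] i'| ≤ (2 * |α| + |α - β| + |α + β|) / 2 := by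
      have n0 := abs_nonneg α
      have n1 := abs_nonneg (α - β)
      have n2 := abs_nonneg (α + β)
      rcases Nat.le_one_iff_eq_zero_or_eq_one.mp hK with h | h
      · rw [Finset.card_eq_zero.mp h, Finset.sum_empty]
        positivity
      · obtain ⟨k, rfl⟩ := Finset.card_eq_one.mp h
        rw [Finset.sum_singleton]
        fin_cases k <;> simp [A17, ← sub_eq_add_neg] <;> linarith
    linarith
end

section
/- Let A be the 7×4 real matrix with rows (2,0,0,1), (2,1,0,0), (2,0,1,0), (2,1,0,1), (2,1,1,0), (2,0,1,1), (2,1,1,1). Then A satisfies condition (A₂) with parameter m = 1: for every x ∈ ℝ⁴∖{0} and every j ∈ [7], Σ_{j'∈[7], j'≠j} |a_{j'}ᵀx| > |a_jᵀx|. -/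
/-! Each row of `A18` is a linear combination of the *other* six rows with all coefficients of
absolute value at most `3/4` (the coefficients are the rows of `coeff18`). Hence
`|a_jᵀx| ≤ (3/4) ∑_{j' ≠ j} |a_{j'}ᵀx|`. The inequality is strict with `1` in place of `3/4` as soon
as the right-hand sum is positive; if that sum is zero, then every `a_kᵀx` vanishes, and since the
rows of `A18` span `ℝ⁴` this forces `x = 0`. -/

open Finset

/-- The 7×4 matrix of STATEMENT 18. -/
def A18 : Fin 7 → Fin 4 → ℝ :=
  ![![2, 0, 0, 1], ![2, 1, 0, 0], ![2, 0, 1, 0], ![2, 1, 0, 1],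
    ![2, 1, 1, 0], ![2, 0, 1, 1], ![2, 1, 1, 1]]

/-- Row `j` lists the coefficients (with `0` on the diagonal) expressing row `j` of `A18` through
the other rows. They are chosen invariant under the permutations of the last three columns that
fix row `j`. -/
noncomputable def coeff18 : Fin 7 → Fin 7 → ℝ :=
  ![![0, 1/4, 1/4, 3/4, -1/2, 3/4, -1/2],
    ![1/4, 0, 1/4, 3/4, 3/4, -1/2, -1/2],
    ![1/4, 1/4, 0, -1/2, 3/4, 3/4, -1/2],
    ![1/2, 1/2, -3/4, 0, 1/4, 1/4, 1/4],
    ![-3/4, 1/2, 1/2, 1/4, 0, 1/4, 1/4],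
    ![1/2, -3/4, 1/2, 1/4, 1/4, 0, 1/4],
    ![-1/3, -1/3, -1/3, 2/3, 2/3, 2/3, 0]]

lemma coeff18_diag (j : Fin 7) : coeff18 j j = 0 := by
  fin_cases j <;> simp [coeff18]

lemma abs_coeff18_le (j k : Fin 7) : |coeff18 j k| ≤ 3 / 4 := by
  rw [abs_le]
  fin_cases j <;> fin_cases k <;> norm_num [coeff18]

lemma A18_apply_eq (x : Fin 4 → ℝ) (j : Fin 7) :
    ∑ i, A18 j i * x i = ∑ k, coeff18 j k * ∑ i, A18 k i * x i := by
  fin_cases j <;> simp [coeff18, A18, Fin.sum_univ_succ] <;> ring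

lemma A18_injective (x : Fin 4 → ℝ) (h : ∀ k, ∑ i, A18 k i * x i = 0) : x = 0 := by
  have h0 := h 0
  have h1 := h 1
  have h2 := h 2
  have h3 := h 3
  have h4 := h 4
  simp [A18, Fin.sum_univ_four] at h0 h1 h2 h3 h4
  ext i
  fin_cases i <;> simp <;> linarith

/-- `A18` satisfies condition (A₂) with parameter `m = 1`: for every
`x ≠ 0` and every `j`, `∑_{j' ≠ j} |a_{j'}ᵀx| > |a_jᵀx|`. -/
theorem stmt_18 :
    ∀ x : Fin 4 → ℝ, x ≠ 0 → ∀ j : Fin 7,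
      |∑ i, A18 j i * x i| <
        ∑ j' ∈ Finset.univ.erase j, |∑ i, A18 j' i * x i| := by
  intro x hx j
  have hle : |∑ i, A18 j i * x i| ≤
      3 / 4 * ∑ k ∈ Finset.univ.erase j, |∑ i, A18 k i * x i| := by
    rw [A18_apply_eq x j, ← Finset.add_sum_erase _ _ (Finset.mem_univ j), coeff18_diag,
      zero_mul, zero_add, Finset.mul_sum]
    refine (Finset.abs_sum_le_sum_abs _ _).trans (Finset.sum_le_sum fun k _ => ?_)
    rw [abs_mul]
    exact mul_le_mul_of_nonneg_right (abs_coeff18_le j k) (abs_nonneg _)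
  have hnonneg : 0 ≤ ∑ k ∈ Finset.univ.erase j, |∑ i, A18 k i * x i| :=
    Finset.sum_nonneg fun k _ => abs_nonneg _
  rcases hnonneg.lt_or_eq with hpos | hzero
  · linarith
  · refine absurd (A18_injective x fun k => ?_) hx
    by_cases hk : k = j
    · subst hk
      rw [← hzero, mul_zero] at hle
      exact abs_nonpos_iff.mp hle
    · exact abs_eq_zero.mp ((Finset.sum_eq_zero_iff_of_nonneg fun k _ => abs_nonneg _).mp
        hzero.symm k (Finset.mem_erase.mpr ⟨hk, Finset.mem_univ k⟩))
end
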